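/- arXiv:1110.0868 — 2 statements merged into one kernel-verified Lean document; each statement's English description precedes it below -/
import Mathlib

section
/- Fix integers j, k ≥ 1, and l with |l| ≤ k+1 and l ≡ k+1 (mod 2), let σ be as defined, and let S = [j−3k+3, j+3k−3]_2 \ {j+l−2k, j+l+σ, j+l+2k}. Then there exist ε ∈ {1,−1}, a monomial M in ℤ[y_i : i ∈ ℤ], and nonnegative integers a, b, c with a+b+c = k such that F_{j,k}|_S = ε·M·(1+y_{j+l−2k})^a·(1+y_{j+l+σ})^b·(1+y_{j+l+2k})^c. In particular, F_{j,k}|_S ≠ 0. -/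
/-!
Covering relations in `P_k` only join an element of `Q_k` to an element of `Q_{k+1}`. Hence an order
ideal `I` is determined by its trace `J = I ∩ Q_k` together with a free choice, for each `x ∈ Q_{k+1}`
all of whose lower covers lie in `J` and none of whose upper covers does, of whether `x ∈ I`. Summing
over these choices gives (`sum_ideals_eq_sum_traces`)

  `F = ∑_J ∏_{J} y · ∏_{forced} y · ∏_{free} (1 + y)`.

The indices of variables attached to `Q_{k+1}` run through `[j-3k+3, j+3k-3]_2`, so after the
substitution every variable attached to `Q_{k+1}` is `-1` except on the three lines
`3r + s ∈ {l - 2k, l + σ, l + 2k}`. A trace `J` therefore contributes only if all its free elements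
lie above these lines.

Traces are the same as corner sum matrices `N(i,m)`, `0 ≤ i, m ≤ k`, of `k × k` alternating sign
matrices (`IsTrace.eq_traceOf`, `IsCornerSum.isTrace`), and free elements correspond to the entries `1`
(`IsCornerSum.cellPt_mem_free`). The three lines meet each row of the `k × k` grid in exactly one cell
`(i, c i)`, and each column in at most one (`exists_onLine`, `onLine_row_unique`,
`onLine_col_unique`); this is where the choice of `σ` enters. Every row of an alternating sign matrix
contains an entry `1`, so the only surviving matrix is the permutation matrix of `c`
(`IsCornerSum.eq_permCornerSum`, `permCornerSum_isCornerSum`). It has `k` free elements, one per row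
(`freeIn_permCornerSum`), and these give the `k` factors `1 + y`; all the other factors are variables
or `-1`.
-/

open MvPolynomial
open scoped Classical

noncomputable section

/-- The set `Q_k`: triples `(r,s,t)` with `|r|+|s| ≤ k-2`, `r+s ≡ k (mod 2)`,
`t ≡ 2|s|-k+2 (mod 4)` and `2|s|-k+2 ≤ t ≤ k-2-2|r|`. -/
def pentagramQ (k : ℤ) : Set (ℤ × ℤ × ℤ) :=
  {p | |p.1| + |p.2.1| ≤ k - 2 ∧ (2 : ℤ) ∣ (p.1 + p.2.1 - k) ∧
    (4 : ℤ) ∣ (p.2.2 - (2 * |p.2.1| - k + 2)) ∧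
    2 * |p.2.1| - k + 2 ≤ p.2.2 ∧ p.2.2 ≤ k - 2 - 2 * |p.1|}

/-- The set `P_k = Q_k ∪ Q_{k+1}`. -/
def pentagramP (k : ℤ) : Set (ℤ × ℤ × ℤ) := pentagramQ k ∪ pentagramQ (k + 1)

/-- The covering relation: `(r',s',t')` covers `(r,s,t)` iff `t' = t + 1` and
`|r'-r| + |s'-s| = 1`. -/
def pentagramCovers (x y : ℤ × ℤ × ℤ) : Prop :=
  y.2.2 = x.2.2 + 1 ∧ |y.1 - x.1| + |y.2.1 - x.2.1| = 1

/-- The partial order on `P_k`: the reflexive-transitive closure of the covering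
relation within `P_k`. -/
def pentagramLe (k : ℤ) : (ℤ × ℤ × ℤ) → (ℤ × ℤ × ℤ) → Prop :=
  Relation.ReflTransGen
    (fun x y => x ∈ pentagramP k ∧ y ∈ pentagramP k ∧ pentagramCovers x y)

/-- An order ideal of `P_k`: a downward-closed subset of `P_k`. -/
def IsPentagramOrderIdeal (k : ℤ) (I : Set (ℤ × ℤ × ℤ)) : Prop :=
  I ⊆ pentagramP k ∧ ∀ x y, y ∈ I → pentagramLe k x y → x ∈ I

/-- `P_k` realized as a `Finset` (it is contained in the displayed finite box). -/
def pentagramPFinset (k : ℤ) : Finset (ℤ × ℤ × ℤ) :=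
  ((Finset.Icc (-(k-1)) (k-1)) ×ˢ (Finset.Icc (-(k-1)) (k-1)) ×ˢ
    (Finset.Icc (-(k-1)) (k-1))).filter (fun p => p ∈ pentagramP k)

/-- The F-polynomial `F_{j,k} = Σ_{order ideals I of P_k} Π_{(r,s,t) ∈ I} y_{3r+s+j}`,
as an element of `ℤ[y_i : i ∈ ℤ] = MvPolynomial ℤ ℤ`. -/
def pentagramF (j k : ℤ) : MvPolynomial ℤ ℤ :=
  ∑ I ∈ (pentagramPFinset k).powerset.filter
      (fun I : Finset (ℤ × ℤ × ℤ) => IsPentagramOrderIdeal k (↑I : Set (ℤ × ℤ × ℤ))),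
    ∏ p ∈ I, X (3 * p.1 + p.2.1 + j)

/-- The ring endomorphism of `ℤ[y_i : i ∈ ℤ]` sending `y_i ↦ -1` for `i ∈ S`
and fixing the other variables; `substNeg S F` is `F|_S`. -/
def substNeg (S : Set ℤ) : MvPolynomial ℤ ℤ →+* MvPolynomial ℤ ℤ :=
  (MvPolynomial.aeval
    (fun i : ℤ => if i ∈ S then (-1 : MvPolynomial ℤ ℤ) else X i)).toRingHom

/-- The arithmetic progression `[a,b]_d = {a, a+d, a+2d, …, b}` (as a subset of `ℤ`). -/
def AP (a b d : ℤ) : Set ℤ := {x | a ≤ x ∧ x ≤ b ∧ d ∣ (x - a)}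

/-- The shift `σ`: `0` if `k` is odd, `-2` if `k` is even and `l+k ≡ 1 (mod 4)`,
and `2` if `k` is even and `l+k ≡ 3 (mod 4)`. -/
def pentagramSigma (k l : ℤ) : ℤ :=
  if k % 2 = 1 then 0 else if (l + k) % 4 = 1 then -2 else 2

/-! ### Ideals of a bipartite relation -/

section Bipartite

variable {α : Type*} [DecidableEq α] {R : Type*} [CommRing R]

/-- The elements of `Q'` below some element of `J ⊆ Q`: they lie in every ideal with trace `J`. -/
def forcedIn (rel : α → α → Prop) (Q' J : Finset α) : Finset α :=
  Q'.filter fun x => ∃ y ∈ J, rel x y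

/-- The elements of `Q'` with all their predecessors from `Q` in `J` and no successor in `J`: an ideal
with trace `J` on `Q` may contain or omit each of them independently. -/
def freeIn (rel : α → α → Prop) (Q Q' J : Finset α) : Finset α :=
  Q'.filter fun x => (∀ y ∈ Q, rel y x → y ∈ J) ∧ ∀ y ∈ J, ¬ rel x y

/-- Closure of `J ⊆ Q` under two-step descents through `Q'`; for `rel` joining only `Q` and `Q'`,
these are the sets `I ∩ Q` with `I` an ideal of `Q ∪ Q'`. -/
def IsTrace (rel : α → α → Prop) (Q Q' J : Finset α) : Prop :=
  ∀ x ∈ Q, ∀ y ∈ Q', ∀ z ∈ J, rel x y → rel y z → x ∈ J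

/-- The generating function of ideals of a bipartite relation, grouped by the trace on `Q`. An ideal
corresponds to its trace `J` and the set of free elements that it contains. -/
lemma sum_ideals_eq_sum_traces (rel : α → α → Prop) (Q Q' : Finset α) (hd : Disjoint Q Q')
    (hQ : ∀ x ∈ Q, ∀ y ∈ Q, ¬ rel x y) (hQ' : ∀ x ∈ Q', ∀ y ∈ Q', ¬ rel x y) (w : α → R) :
    ∑ I ∈ (Q ∪ Q').powerset.filter
        (fun I => ∀ x ∈ Q ∪ Q', ∀ y ∈ I, rel x y → x ∈ I), ∏ p ∈ I, w p =
      ∑ J ∈ Q.powerset.filter (IsTrace rel Q Q'),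
        ((∏ p ∈ J, w p) * ∏ p ∈ forcedIn rel Q' J, w p) *
          ∏ p ∈ freeIn rel Q Q' J, (1 + w p) := by
  have hd' : ∀ x ∈ Q, x ∉ Q' := fun x hx hx' => Finset.disjoint_left.1 hd hx hx'
  simp_rw [Finset.prod_one_add, Finset.mul_sum]
  rw [Finset.sum_sigma']
  symm
  refine Finset.sum_bij' (fun p _ => p.1 ∪ forcedIn rel Q' p.1 ∪ p.2)
    (fun I _ => ⟨I ∩ Q, I ∩ freeIn rel Q Q' (I ∩ Q)⟩) ?_ ?_ ?_ ?_ ?_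
  · rintro ⟨J, T⟩ h
    simp only [Finset.mem_sigma, Finset.mem_filter, Finset.mem_powerset, freeIn, forcedIn,
      IsTrace, Finset.subset_iff] at h ⊢
    obtain ⟨⟨hJ, hc⟩, hT⟩ := h
    constructor
    · grind
    · intro x hx y hy hr
      simp only [Finset.mem_union, Finset.mem_filter] at hx hy ⊢
      rcases hx with hx | hx
      · rcases hy with (hy | hy) | hy
        · exact absurd hr (hQ x hx y (hJ hy))
        · obtain ⟨hy, z, hz, hyz⟩ := hy
          exact Or.inl (Or.inl (hc x hx y hy z hz hr hyz))
        · exact Or.inl (Or.inl ((hT hy).2.1 x hx hr))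
      · rcases hy with (hy | hy) | hy
        · exact Or.inl (Or.inr ⟨hx, y, hy, hr⟩)
        · exact absurd hr (hQ' x hx y hy.1)
        · exact absurd hr (hQ' x hx y (hT hy).1)
  · intro I h
    simp only [Finset.mem_sigma, Finset.mem_filter, Finset.mem_powerset, freeIn,
      IsTrace, Finset.subset_iff, Finset.mem_inter, Finset.mem_union] at h ⊢
    obtain ⟨hI, hc⟩ := h
    refine ⟨⟨fun x hx => hx.2, fun x hx y hy z hz h1 h2 => ⟨?_, hx⟩⟩, fun x hx => hx.2⟩
    exact hc x (Or.inl hx) y (hc y (Or.inr hy) z hz.1 h2) h1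
  · rintro ⟨J, T⟩ h
    simp only [Finset.mem_sigma, Finset.mem_filter, Finset.mem_powerset, freeIn,
      IsTrace, Finset.subset_iff] at h
    obtain ⟨⟨hJ, hc⟩, hT⟩ := h
    have h1 : (J ∪ forcedIn rel Q' J ∪ T) ∩ Q = J := by
      ext x
      simp only [forcedIn, Finset.mem_inter, Finset.mem_union, Finset.mem_filter]
      grind
    have h2 : (J ∪ forcedIn rel Q' J ∪ T) ∩ freeIn rel Q Q' J = T := by
      ext x
      simp only [forcedIn, freeIn, Finset.mem_inter, Finset.mem_union, Finset.mem_filter]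
      grind
    simp only [h1, h2]
  · intro I h
    simp only [Finset.mem_filter, Finset.mem_powerset, Finset.subset_iff, Finset.mem_union] at h
    obtain ⟨hI, hc⟩ := h
    ext x
    simp only [forcedIn, freeIn, Finset.mem_inter, Finset.mem_union, Finset.mem_filter]
    constructor
    · rintro ((hx | ⟨hx, y, hy, hr⟩) | hx)
      · exact hx.1
      · exact hc x (Or.inr hx) y hy.1 hr
      · exact hx.1
    · intro hx
      rcases hI hx with hq | hq
      · exact Or.inl (Or.inl ⟨hx, hq⟩)
      · by_cases hf : ∃ y, (y ∈ I ∧ y ∈ Q) ∧ rel x y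
        · exact Or.inl (Or.inr ⟨hq, hf⟩)
        · push Not at hf
          exact Or.inr ⟨hx, hq, fun y hy hr => ⟨hc y (Or.inl hy) x hx hr, hy⟩, hf⟩
  · rintro ⟨J, T⟩ h
    simp only [Finset.mem_sigma, Finset.mem_filter, Finset.mem_powerset, freeIn,
      Finset.subset_iff] at h
    obtain ⟨⟨hJ, hc⟩, hT⟩ := h
    rw [Finset.prod_union, Finset.prod_union]
    · rw [Finset.disjoint_left]; simp only [forcedIn, Finset.mem_filter]; grind
    · rw [Finset.disjoint_left]
      simp only [forcedIn, Finset.mem_union, Finset.mem_filter]; grind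

end Bipartite

/-! ### Grid coordinates on `Q_k` and `Q_{k+1}` -/

/-- The element of the lattice containing `Q_k` at the corner `(i, m)` of a `k × k` grid of cells
(corners are indexed by `0 ≤ i, m ≤ k`). The level `n` decreases as `t` increases. -/
def cornerPt (k i m n : ℤ) : ℤ × ℤ × ℤ := (i + m - k, i - m, 2 * (i + m) - k - 2 - 4 * n)

/-- The element of the lattice containing `Q_{k+1}` at the cell `(i, m)`, `0 ≤ i, m < k`, whose corners
are `(i, m)`, `(i + 1, m)`, `(i, m + 1)`, `(i + 1, m + 1)`. -/
def cellPt (k i m n : ℤ) : ℤ × ℤ × ℤ := (i + m + 1 - k, i - m, 2 * (i + m) - k + 1 - 4 * n)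

lemma cornerPt_mem {k i m n : ℤ} :
    cornerPt k i m n ∈ pentagramQ k ↔ 0 ≤ n ∧ i + m - k ≤ n ∧ n < i ∧ n < m := by
  simp only [cornerPt, pentagramQ, Set.mem_ofPred_eq]
  rcases abs_cases (i + m - k) with ⟨h1, _⟩ | ⟨h1, _⟩ <;>
  rcases abs_cases (i - m) with ⟨h2, _⟩ | ⟨h2, _⟩ <;> rw [h1, h2] <;> omega

lemma cellPt_mem {k i m n : ℤ} :
    cellPt k i m n ∈ pentagramQ (k + 1) ↔ 0 ≤ n ∧ i + m + 1 - k ≤ n ∧ n ≤ i ∧ n ≤ m := by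
  have h : cellPt k i m n = cornerPt (k + 1) (i + 1) (m + 1) n := by
    simp only [cellPt, cornerPt, Prod.mk.injEq]; omega
  rw [h, cornerPt_mem]; omega

lemma exists_cornerPt {k : ℤ} {x : ℤ × ℤ × ℤ} (hx : x ∈ pentagramQ k) :
    ∃ i m n, x = cornerPt k i m n := by
  obtain ⟨r, s, t⟩ := x
  simp only [pentagramQ, Set.mem_ofPred_eq] at hx
  obtain ⟨-, ⟨a, ha⟩, ⟨b, hb⟩, -⟩ := hx
  rcases abs_cases s with ⟨h2, _⟩ | ⟨h2, _⟩ <;> rw [h2] at hb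
  · exact ⟨a + k, a + k - s, a + k - s - 1 - b, by
      simp only [cornerPt, Prod.mk.injEq]; omega⟩
  · exact ⟨a + k, a + k - s, a + k - 1 - b, by
      simp only [cornerPt, Prod.mk.injEq]; omega⟩

lemma exists_cellPt {k : ℤ} {x : ℤ × ℤ × ℤ} (hx : x ∈ pentagramQ (k + 1)) :
    ∃ i m n, x = cellPt k i m n := by
  obtain ⟨i, m, n, rfl⟩ := exists_cornerPt hx
  exact ⟨i - 1, m - 1, n, by simp only [cellPt, cornerPt, Prod.mk.injEq]; omega⟩

lemma cornerPt_inj {k i m n i' m' n' : ℤ} :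
    cornerPt k i m n = cornerPt k i' m' n' ↔ i = i' ∧ m = m' ∧ n = n' := by
  simp only [cornerPt, Prod.mk.injEq]; omega

lemma cellPt_inj {k i m n i' m' n' : ℤ} :
    cellPt k i m n = cellPt k i' m' n' ↔ i = i' ∧ m = m' ∧ n = n' := by
  simp only [cellPt, Prod.mk.injEq]; omega

/-- The elements covering a cell element sit at its corners `(i, m)` and `(i + 1, m + 1)`. -/
lemma cell_covers_corner {k i m n i' m' n' : ℤ} :
    pentagramCovers (cellPt k i m n) (cornerPt k i' m' n') ↔
      (i' = i ∧ m' = m ∧ n' = n - 1) ∨ (i' = i + 1 ∧ m' = m + 1 ∧ n' = n) := by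
  simp only [pentagramCovers, cellPt, cornerPt]
  rcases abs_cases (i' + m' - k - (i + m + 1 - k)) with ⟨h1, _⟩ | ⟨h1, _⟩ <;>
  rcases abs_cases (i' - m' - (i - m)) with ⟨h2, _⟩ | ⟨h2, _⟩ <;> rw [h1, h2] <;> omega

/-- The elements covered by a cell element sit at its corners `(i + 1, m)` and `(i, m + 1)`. -/
lemma corner_covers_cell {k i m n i' m' n' : ℤ} :
    pentagramCovers (cornerPt k i' m' n') (cellPt k i m n) ↔
      (i' = i + 1 ∧ m' = m ∧ n' = n) ∨ (i' = i ∧ m' = m + 1 ∧ n' = n) := by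
  simp only [pentagramCovers, cellPt, cornerPt]
  rcases abs_cases (i + m + 1 - k - (i' + m' - k)) with ⟨h1, _⟩ | ⟨h1, _⟩ <;>
  rcases abs_cases (i - m - (i' - m')) with ⟨h2, _⟩ | ⟨h2, _⟩ <;> rw [h1, h2] <;> omega

/-- A covering relation changes the parity of `r + s`, which is constant on `Q_k`. -/
lemma not_covers_of_mem_Q {k : ℤ} {x y : ℤ × ℤ × ℤ} (hx : x ∈ pentagramQ k)
    (hy : y ∈ pentagramQ k) : ¬ pentagramCovers x y := by
  obtain ⟨i, m, n, rfl⟩ := exists_cornerPt hx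
  obtain ⟨i', m', n', rfl⟩ := exists_cornerPt hy
  simp only [pentagramCovers, cornerPt]
  rcases abs_cases (i' + m' - k - (i + m - k)) with ⟨h1, _⟩ | ⟨h1, _⟩ <;>
  rcases abs_cases (i' - m' - (i - m)) with ⟨h2, _⟩ | ⟨h2, _⟩ <;> rw [h1, h2] <;> omega

/-- `Q_k` as a finset. -/
def cornerSet (k : ℤ) : Finset (ℤ × ℤ × ℤ) :=
  (pentagramPFinset k).filter fun p => p ∈ pentagramQ k

/-- `Q_{k+1}` as a finset. -/
def cellSet (k : ℤ) : Finset (ℤ × ℤ × ℤ) :=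
  (pentagramPFinset k).filter fun p => p ∈ pentagramQ (k + 1)

lemma mem_pentagramPFinset {k : ℤ} {x : ℤ × ℤ × ℤ} :
    x ∈ pentagramPFinset k ↔ x ∈ pentagramP k := by
  simp only [pentagramPFinset, Finset.mem_filter, Finset.mem_product, Finset.mem_Icc,
    and_iff_right_iff_imp]
  rintro (hx | hx)
  · obtain ⟨i, m, n, rfl⟩ := exists_cornerPt hx
    rw [cornerPt_mem] at hx
    simp only [cornerPt]; omega
  · obtain ⟨i, m, n, rfl⟩ := exists_cellPt hx
    rw [cellPt_mem] at hx
    simp only [cellPt]; omega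

lemma mem_cornerSet {k : ℤ} {x : ℤ × ℤ × ℤ} : x ∈ cornerSet k ↔ x ∈ pentagramQ k := by
  simp only [cornerSet, Finset.mem_filter, mem_pentagramPFinset, and_iff_right_iff_imp]
  exact Or.inl

lemma mem_cellSet {k : ℤ} {x : ℤ × ℤ × ℤ} : x ∈ cellSet k ↔ x ∈ pentagramQ (k + 1) := by
  simp only [cellSet, Finset.mem_filter, mem_pentagramPFinset, and_iff_right_iff_imp]
  exact Or.inr

lemma cornerSet_union_cellSet (k : ℤ) : cornerSet k ∪ cellSet k = pentagramPFinset k := by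
  ext x
  rw [Finset.mem_union, mem_cornerSet, mem_cellSet, mem_pentagramPFinset]; rfl

lemma disjoint_cornerSet_cellSet (k : ℤ) : Disjoint (cornerSet k) (cellSet k) := by
  rw [Finset.disjoint_left]
  intro x h1 h2
  rw [mem_cornerSet] at h1
  rw [mem_cellSet] at h2
  obtain ⟨i, m, n, rfl⟩ := exists_cornerPt h1
  have := h2.2.1
  simp only [cornerPt] at this
  omega

/-- It suffices to test downward closure on covering pairs. -/
lemma isPentagramOrderIdeal_iff {k : ℤ} {I : Set (ℤ × ℤ × ℤ)} (hI : I ⊆ pentagramP k) :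
    IsPentagramOrderIdeal k I ↔
      ∀ x ∈ pentagramP k, ∀ y ∈ I, pentagramCovers x y → x ∈ I := by
  constructor
  · rintro ⟨-, h⟩ x hx y hy hxy
    exact h x y hy (Relation.ReflTransGen.single ⟨hx, hI hy, hxy⟩)
  · refine fun h => ⟨hI, fun x y hy hxy => ?_⟩
    induction hxy using Relation.ReflTransGen.head_induction_on with
    | refl => exact hy
    | head h1 _ ih => exact h _ h1.1 _ ih h1.2.2

lemma map_pentagramF (f : MvPolynomial ℤ ℤ →+* MvPolynomial ℤ ℤ) (j k : ℤ) :
    f (pentagramF j k) =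
      ∑ J ∈ (cornerSet k).powerset.filter
          (IsTrace pentagramCovers (cornerSet k) (cellSet k)),
        ((∏ p ∈ J, f (X (3 * p.1 + p.2.1 + j))) *
          ∏ p ∈ forcedIn pentagramCovers (cellSet k) J, f (X (3 * p.1 + p.2.1 + j))) *
          ∏ p ∈ freeIn pentagramCovers (cornerSet k) (cellSet k) J,
            (1 + f (X (3 * p.1 + p.2.1 + j))) := by
  rw [← sum_ideals_eq_sum_traces pentagramCovers _ _ (disjoint_cornerSet_cellSet k)
    (fun x hx y hy => not_covers_of_mem_Q (mem_cornerSet.1 hx) (mem_cornerSet.1 hy))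
    (fun x hx y hy => not_covers_of_mem_Q (mem_cellSet.1 hx) (mem_cellSet.1 hy))
    (fun p => f (X (3 * p.1 + p.2.1 + j)))]
  rw [pentagramF, map_sum]
  simp_rw [map_prod]
  refine Finset.sum_congr ?_ fun _ _ => rfl
  ext I
  simp only [Finset.mem_filter, Finset.mem_powerset, cornerSet_union_cellSet]
  refine and_congr_right fun hI => ?_
  have hI' : (I : Set (ℤ × ℤ × ℤ)) ⊆ pentagramP k := fun x hx => mem_pentagramPFinset.1 (hI hx)
  rw [isPentagramOrderIdeal_iff hI']
  simp only [mem_pentagramPFinset, Finset.mem_coe]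

/-! ### Traces and corner sum matrices -/

/-- `N`, restricted to `0 ≤ i, m ≤ k`, is the corner sum matrix of a `k × k` alternating sign matrix.
The bounds include the boundary values `N 0 m = N i 0 = 0`, `N k m = m` and `N i k = i`. -/
structure IsCornerSum (k : ℤ) (N : ℤ → ℤ → ℤ) : Prop where
  bounds : ∀ i m, 0 ≤ i → i ≤ k → 0 ≤ m → m ≤ k →
    0 ≤ N i m ∧ i + m - k ≤ N i m ∧ N i m ≤ i ∧ N i m ≤ m
  row : ∀ i m, 0 ≤ i → i < k → 0 ≤ m → m ≤ k →
    N i m ≤ N (i + 1) m ∧ N (i + 1) m ≤ N i m + 1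
  col : ∀ i m, 0 ≤ i → i ≤ k → 0 ≤ m → m < k →
    N i m ≤ N i (m + 1) ∧ N i (m + 1) ≤ N i m + 1

lemma IsTrace.step {k : ℤ} {J : Finset (ℤ × ℤ × ℤ)}
    (hJ : IsTrace pentagramCovers (cornerSet k) (cellSet k) J) {i m n : ℤ}
    (hx : cornerPt k i m n ∈ pentagramQ k)
    (h : cornerPt k (i - 1) m (n - 1) ∈ J ∨ cornerPt k i (m + 1) n ∈ J ∨
      cornerPt k i (m - 1) (n - 1) ∈ J ∨ cornerPt k (i + 1) m n ∈ J) :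
    cornerPt k i m n ∈ J := by
  have hb := cornerPt_mem.1 hx
  have h1 : cellPt k (i - 1) m n ∈ cellSet k := by
    rw [mem_cellSet, cellPt_mem]; omega
  have h2 : cellPt k i (m - 1) n ∈ cellSet k := by
    rw [mem_cellSet, cellPt_mem]; omega
  have hx' := mem_cornerSet.2 hx
  rcases h with h | h | h | h
  · exact hJ _ hx' _ h1 _ h (corner_covers_cell.2 (by omega)) (cell_covers_corner.2 (by omega))
  · exact hJ _ hx' _ h1 _ h (corner_covers_cell.2 (by omega)) (cell_covers_corner.2 (by omega))
  · exact hJ _ hx' _ h2 _ h (corner_covers_cell.2 (by omega)) (cell_covers_corner.2 (by omega))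
  · exact hJ _ hx' _ h2 _ h (corner_covers_cell.2 (by omega)) (cell_covers_corner.2 (by omega))

/-- Within the column above a corner, a trace is closed under increasing `n` (decreasing `t`). -/
lemma IsTrace.up {k : ℤ} {J : Finset (ℤ × ℤ × ℤ)}
    (hJ : IsTrace pentagramCovers (cornerSet k) (cellSet k) J) {i m n : ℤ}
    (h : cornerPt k i m n ∈ J) (h0 : 0 ≤ n) (h1 : i + m - k ≤ n) :
    ∀ d : ℕ, n + d < i → n + d < m → cornerPt k i m (n + d) ∈ J := by
  intro d
  induction d with
  | zero => intro _ _; simpa using h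
  | succ d ih =>
    intro hi hm
    push_cast at hi hm ⊢
    have ih := ih (by omega) (by omega)
    refine hJ.step (cornerPt_mem.2 (by omega)) (Or.inr (Or.inr (Or.inr ?_)))
    refine hJ.step (cornerPt_mem.2 (by omega)) (Or.inl ?_)
    convert ih using 2 <;> omega

/-- The corner sum matrix of a trace: `N i m` is the least admissible level of the trace at the corner
`(i, m)`, where levels `n ≥ min i m`, lying below all of `Q_k`, count as present. -/
lemma IsTrace.exists_cornerSum {k : ℤ} {J : Finset (ℤ × ℤ × ℤ)}
    (hJ : IsTrace pentagramCovers (cornerSet k) (cellSet k) J) :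
    ∃ N, IsCornerSum k N ∧ ∀ i m n, cornerPt k i m n ∈ pentagramQ k →
      (cornerPt k i m n ∈ J ↔ N i m ≤ n) := by
  have key : ∀ i m : ℤ, ∃ N : ℤ,
      ((0 ≤ N ∧ i + m - k ≤ N) ∧ (i ≤ N ∨ m ≤ N ∨ cornerPt k i m N ∈ J)) ∧
      ∀ n : ℤ, ((0 ≤ n ∧ i + m - k ≤ n) ∧ (i ≤ n ∨ m ≤ n ∨ cornerPt k i m n ∈ J)) → N ≤ n := by
    intro i m
    apply Int.exists_least_of_bdd
    · exact ⟨0, fun z hz => hz.1.1⟩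
    · exact ⟨max (max 0 (i + m - k)) i, by simp⟩
  choose N hN hmin using key
  refine ⟨N, ⟨?_, ?_, ?_⟩, ?_⟩
  · intro i m hi hik hm hmk
    have h1 := hN i m
    have h2 := hmin i m i (by omega)
    have h3 := hmin i m m (by omega)
    omega
  · intro i m hi hik hm hmk
    constructor
    · apply hmin
      have h1 := hN (i + 1) m
      refine ⟨by omega, ?_⟩
      by_cases hc : i ≤ N (i + 1) m ∨ m ≤ N (i + 1) m
      · tauto
      · refine Or.inr (Or.inr (hJ.step (cornerPt_mem.2 (by omega)) ?_))
        rcases h1.2 with h | h | h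
        · omega
        · omega
        · tauto
    · apply hmin
      have h1 := hN i m
      refine ⟨by omega, ?_⟩
      by_cases hc : i + 1 ≤ N i m + 1 ∨ m ≤ N i m + 1
      · tauto
      · refine Or.inr (Or.inr (hJ.step (cornerPt_mem.2 (by omega)) (Or.inl ?_)))
        rcases h1.2 with h | h | h
        · omega
        · omega
        · simpa using h
  · intro i m hi hik hm hmk
    constructor
    · apply hmin
      have h1 := hN i (m + 1)
      refine ⟨by omega, ?_⟩
      by_cases hc : i ≤ N i (m + 1) ∨ m ≤ N i (m + 1)
      · tauto
      · refine Or.inr (Or.inr (hJ.step (cornerPt_mem.2 (by omega)) ?_))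
        rcases h1.2 with h | h | h
        · omega
        · omega
        · tauto
    · apply hmin
      have h1 := hN i m
      refine ⟨by omega, ?_⟩
      by_cases hc : i ≤ N i m + 1 ∨ m + 1 ≤ N i m + 1
      · tauto
      · refine Or.inr (Or.inr (hJ.step (cornerPt_mem.2 (by omega)) (Or.inr (Or.inr (Or.inl ?_)))))
        rcases h1.2 with h | h | h
        · omega
        · omega
        · simpa using h
  · intro i m n hx
    have hb := cornerPt_mem.1 hx
    constructor
    · intro h
      exact hmin i m n ⟨by omega, by tauto⟩
    · intro h
      have h1 := hN i m
      have h2 : cornerPt k i m (N i m) ∈ J := by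
        rcases h1.2 with h' | h' | h'
        · omega
        · omega
        · exact h'
      have := hJ.up h2 h1.1.1 h1.1.2 (n - N i m).toNat (by omega) (by omega)
      rwa [show N i m + ((n - N i m).toNat : ℤ) = n by omega] at this

/-- The elements of `Q_k` whose level is at least the value of `N` at their corner. -/
def traceOf (k : ℤ) (N : ℤ → ℤ → ℤ) : Finset (ℤ × ℤ × ℤ) :=
  (cornerSet k).filter fun x => ∃ i m n, x = cornerPt k i m n ∧ N i m ≤ n

lemma cornerPt_mem_traceOf {k : ℤ} {N : ℤ → ℤ → ℤ} {i m n : ℤ} :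
    cornerPt k i m n ∈ traceOf k N ↔ cornerPt k i m n ∈ pentagramQ k ∧ N i m ≤ n := by
  simp only [traceOf, Finset.mem_filter, mem_cornerSet]
  refine and_congr_right fun _ => ⟨?_, fun h => ⟨i, m, n, rfl, h⟩⟩
  rintro ⟨i', m', n', he, h⟩
  obtain ⟨rfl, rfl, rfl⟩ := cornerPt_inj.1 he
  exact h

lemma IsTrace.eq_traceOf {k : ℤ} {J : Finset (ℤ × ℤ × ℤ)}
    (hJ : IsTrace pentagramCovers (cornerSet k) (cellSet k) J) (hJQ : J ⊆ cornerSet k) :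
    ∃ N, IsCornerSum k N ∧ J = traceOf k N := by
  obtain ⟨N, hN, h⟩ := hJ.exists_cornerSum
  refine ⟨N, hN, ?_⟩
  ext x
  constructor
  · intro hx
    have hxQ := mem_cornerSet.1 (hJQ hx)
    obtain ⟨i, m, n, rfl⟩ := exists_cornerPt hxQ
    exact cornerPt_mem_traceOf.2 ⟨hxQ, (h i m n hxQ).1 hx⟩
  · intro hx
    have hxQ := mem_cornerSet.1 (Finset.mem_of_mem_filter x hx)
    obtain ⟨i, m, n, rfl⟩ := exists_cornerPt hxQ
    exact (h i m n hxQ).2 (cornerPt_mem_traceOf.1 hx).2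

lemma traceOf_congr {k : ℤ} {N N' : ℤ → ℤ → ℤ}
    (h : ∀ i m, 0 ≤ i → i ≤ k → 0 ≤ m → m ≤ k → N i m = N' i m) :
    traceOf k N = traceOf k N' := by
  ext x
  by_cases hx : x ∈ pentagramQ k
  · obtain ⟨i, m, n, rfl⟩ := exists_cornerPt hx
    have hb := cornerPt_mem.1 hx
    rw [cornerPt_mem_traceOf, cornerPt_mem_traceOf, h i m (by omega) (by omega) (by omega)
      (by omega)]
  · simp [traceOf, mem_cornerSet, hx]

lemma IsCornerSum.isTrace {k : ℤ} {N : ℤ → ℤ → ℤ} (hN : IsCornerSum k N) :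
    IsTrace pentagramCovers (cornerSet k) (cellSet k) (traceOf k N) := by
  intro x hx y hy z hz hxy hyz
  have hzQ := mem_cornerSet.1 (Finset.mem_of_mem_filter z hz)
  rw [mem_cornerSet] at hx
  rw [mem_cellSet] at hy
  obtain ⟨i, m, n, rfl⟩ := exists_cornerPt hx
  obtain ⟨i₁, m₁, n₁, rfl⟩ := exists_cellPt hy
  obtain ⟨i₂, m₂, n₂, rfl⟩ := exists_cornerPt hzQ
  rw [cornerPt_mem_traceOf] at hz ⊢
  refine ⟨hx, ?_⟩
  have hz2 := hz.2
  rw [cornerPt_mem] at hx hzQ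
  rcases corner_covers_cell.1 hxy with ⟨rfl, rfl, rfl⟩ | ⟨rfl, rfl, rfl⟩ <;>
  rcases cell_covers_corner.1 hyz with ⟨rfl, rfl, rfl⟩ | ⟨rfl, rfl, rfl⟩
  · have := hN.row i₂ m₂ (by omega) (by omega) (by omega) (by omega); omega
  · have := hN.col (i₁ + 1) m (by omega) (by omega) (by omega) (by omega); omega
  · have := hN.col i₂ m₂ (by omega) (by omega) (by omega) (by omega); omega
  · have := hN.row i (m₁ + 1) (by omega) (by omega) (by omega) (by omega); omega

/-- Free elements occur at the cells where the mixed difference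
`N (i+1) (m+1) - N (i+1) m - N i (m+1) + N i m` equals `1`, one for each such cell. -/
lemma IsCornerSum.cellPt_mem_free {k : ℤ} {N : ℤ → ℤ → ℤ} (hN : IsCornerSum k N) {i m n : ℤ} :
    cellPt k i m n ∈ freeIn pentagramCovers (cornerSet k) (cellSet k) (traceOf k N) ↔
      (0 ≤ i ∧ i < k ∧ 0 ≤ m ∧ m < k) ∧ N i m = n ∧ N (i + 1) m = N i m ∧
        N i (m + 1) ≠ N (i + 1) (m + 1) := by
  simp only [freeIn, Finset.mem_filter, mem_cellSet, mem_cornerSet]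
  constructor
  · rintro ⟨hb, hlow, hup⟩
    rw [cellPt_mem] at hb
    have b1 := hN.bounds i m (by omega) (by omega) (by omega) (by omega)
    have b2 := hN.bounds (i + 1) m (by omega) (by omega) (by omega) (by omega)
    have b3 := hN.bounds i (m + 1) (by omega) (by omega) (by omega) (by omega)
    have b4 := hN.bounds (i + 1) (m + 1) (by omega) (by omega) (by omega) (by omega)
    have r1 := hN.row i m (by omega) (by omega) (by omega) (by omega)
    have c1 := hN.col i m (by omega) (by omega) (by omega) (by omega)
    have h1 : N (i + 1) m ≤ n := by
      by_cases hq : cornerPt k (i + 1) m n ∈ pentagramQ k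
      · exact (cornerPt_mem_traceOf.1 (hlow _ hq (corner_covers_cell.2 (by omega)))).2
      · rw [cornerPt_mem] at hq; omega
    have h2 : N i (m + 1) ≤ n := by
      by_cases hq : cornerPt k i (m + 1) n ∈ pentagramQ k
      · exact (cornerPt_mem_traceOf.1 (hlow _ hq (corner_covers_cell.2 (by omega)))).2
      · rw [cornerPt_mem] at hq; omega
    have h3 : n ≤ N i m := by
      by_contra hc
      by_cases hq : cornerPt k i m (n - 1) ∈ pentagramQ k
      · exact hup _ (cornerPt_mem_traceOf.2 ⟨hq, by omega⟩) (cell_covers_corner.2 (by omega))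
      · rw [cornerPt_mem] at hq; omega
    have h4 : n < N (i + 1) (m + 1) := by
      by_contra hc
      by_cases hq : cornerPt k (i + 1) (m + 1) n ∈ pentagramQ k
      · exact hup _ (cornerPt_mem_traceOf.2 ⟨hq, by omega⟩) (cell_covers_corner.2 (by omega))
      · rw [cornerPt_mem] at hq; omega
    omega
  · rintro ⟨hb, hn, h1, h2⟩
    have b1 := hN.bounds i m (by omega) (by omega) (by omega) (by omega)
    have b4 := hN.bounds (i + 1) (m + 1) (by omega) (by omega) (by omega) (by omega)
    have r1 := hN.row i (m + 1) (by omega) (by omega) (by omega) (by omega)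
    have c1 := hN.col i m (by omega) (by omega) (by omega) (by omega)
    have c2 := hN.col (i + 1) m (by omega) (by omega) (by omega) (by omega)
    refine ⟨cellPt_mem.2 (by omega), ?_, ?_⟩
    · intro y hy hr
      obtain ⟨i', m', n', rfl⟩ := exists_cornerPt hy
      refine cornerPt_mem_traceOf.2 ⟨hy, ?_⟩
      rcases corner_covers_cell.1 hr with ⟨rfl, rfl, rfl⟩ | ⟨rfl, rfl, rfl⟩ <;> omega
    · intro y hy hr
      have hyQ := mem_cornerSet.1 (Finset.mem_of_mem_filter y hy)
      obtain ⟨i', m', n', rfl⟩ := exists_cornerPt hyQ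
      have := (cornerPt_mem_traceOf.1 hy).2
      rcases cell_covers_corner.1 hr with ⟨rfl, rfl, rfl⟩ | ⟨rfl, rfl, rfl⟩ <;> omega

/-! ### The corner sum matrix of a permutation -/

/-- The corner sum matrix of the permutation matrix with an entry `1` at `(i, c i)` for each row `i`. -/
def permCornerSum (c : ℤ → ℤ) (i m : ℤ) : ℤ :=
  ∑ i' ∈ Finset.Ico 0 i, if c i' < m then 1 else 0

lemma permCornerSum_row (c : ℤ → ℤ) {i : ℤ} (hi : 0 ≤ i) (m : ℤ) :
    permCornerSum c (i + 1) m = permCornerSum c i m + if c i < m then 1 else 0 := by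
  have h : Finset.Ico 0 (i + 1) = insert i (Finset.Ico 0 i) := by
    ext x; simp only [Finset.mem_Ico, Finset.mem_insert]; omega
  rw [permCornerSum, h, Finset.sum_insert (by simp), add_comm]; rfl

lemma permCornerSum_col (c : ℤ → ℤ) (i m : ℤ) :
    permCornerSum c i (m + 1) =
      permCornerSum c i m + ((Finset.Ico 0 i).filter fun i' => c i' = m).card := by
  simp only [permCornerSum, Finset.card_filter, Nat.cast_sum, ← Finset.sum_add_distrib]
  refine Finset.sum_congr rfl fun x _ => ?_
  split_ifs <;> omega

section Perm

variable {k : ℤ} {c : ℤ → ℤ}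

lemma permCornerSum_isCornerSum (hc : ∀ i, 0 ≤ i → i < k → 0 ≤ c i ∧ c i < k)
    (hinj : ∀ i i', 0 ≤ i → i < k → 0 ≤ i' → i' < k → c i = c i' → i = i') :
    IsCornerSum k (permCornerSum c) := by
  have hrow : ∀ i m, 0 ≤ i → permCornerSum c i m ≤ permCornerSum c (i + 1) m ∧
      permCornerSum c (i + 1) m ≤ permCornerSum c i m + 1 := by
    intro i m hi
    rw [permCornerSum_row c hi]
    split_ifs <;> omega
  have hcol : ∀ i m, i ≤ k → permCornerSum c i m ≤ permCornerSum c i (m + 1) ∧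
      permCornerSum c i (m + 1) ≤ permCornerSum c i m + 1 := by
    intro i m hi
    rw [permCornerSum_col]
    have : ((Finset.Ico 0 i).filter fun i' => c i' = m).card ≤ 1 := by
      rw [Finset.card_le_one]
      intro x hx y hy
      simp only [Finset.mem_filter, Finset.mem_Ico] at hx hy
      exact hinj x y (by omega) (by omega) (by omega) (by omega) (by omega)
    omega
  have h0 : ∀ i, i ≤ k → permCornerSum c i 0 = 0 := by
    intro i hi
    refine Finset.sum_eq_zero fun x hx => if_neg ?_
    rw [Finset.mem_Ico] at hx
    have := hc x (by omega) (by omega)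
    omega
  have hk : ∀ i, 0 ≤ i → i ≤ k → permCornerSum c i k = i := by
    intro i h0 hi
    rw [permCornerSum, Finset.sum_congr rfl (g := fun _ => (1 : ℤ))]
    · simp [h0]
    · intro x hx
      rw [Finset.mem_Ico] at hx
      exact if_pos (hc x (by omega) (by omega)).2
  refine ⟨?_, fun i m hi _ _ _ => hrow i m hi, fun i m _ hi _ _ => hcol i m hi⟩
  intro i m hi hik hm hmk
  have e1 : 0 ≤ permCornerSum c i m :=
    Finset.sum_nonneg fun x _ => by split_ifs <;> omega
  have e2 : permCornerSum c i m ≤ i := by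
    have : permCornerSum c i m ≤ permCornerSum c i k := by
      refine Finset.sum_le_sum fun x _ => ?_
      split_ifs <;> omega
    rwa [hk i hi hik] at this
  have e3 : ∀ m, 0 ≤ m → permCornerSum c i m ≤ m := by
    intro m hm
    induction m, hm using Int.leInduction with
    | base => rw [h0 i hik]
    | succ m hm ih =>
      have := hcol i m hik
      omega
  have e4 : ∀ m, m ≤ k → i + m - k ≤ permCornerSum c i m := by
    intro m hm
    induction m, hm using Int.leInductionDown with
    | base => rw [hk i hi hik]; omega
    | pred m hm ih =>
      have := hcol i (m - 1) hik
      rw [sub_add_cancel] at this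
      omega
  exact ⟨e1, e4 m hmk, e2, e3 m hm⟩

/-- A corner sum matrix whose entries `1` all lie at cells `(i, c i)` is that of the permutation `c`.
In row `i` the difference `N (i+1) m - N i m` goes from `0` at `m = 0` to `1` at `m = k`, and jumps
from `0` to `1` only at an entry `1`, so the jump is at `c i`. -/
lemma IsCornerSum.eq_permCornerSum {N : ℤ → ℤ → ℤ} (hN : IsCornerSum k N)
    (hc : ∀ i, 0 ≤ i → i < k → 0 ≤ c i ∧ c i < k)
    (hfree : ∀ i m, 0 ≤ i → i < k → 0 ≤ m → m < k → N (i + 1) m = N i m →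
      N i (m + 1) ≠ N (i + 1) (m + 1) → m = c i) :
    ∀ i m, 0 ≤ i → i ≤ k → 0 ≤ m → m ≤ k → N i m = permCornerSum c i m := by
  have h1 : ∀ i, 0 ≤ i → i < k → ∀ m, 0 ≤ m → m ≤ c i → N (i + 1) m = N i m := by
    intro i hi hik m hm
    have hci := hc i hi hik
    induction m, hm using Int.leInduction with
    | base =>
      intro _
      have := hN.bounds i 0 hi (by omega) le_rfl (by omega)
      have := hN.bounds (i + 1) 0 (by omega) (by omega) le_rfl (by omega)
      omega
    | succ m hm ih =>
      intro hmc
      by_contra hne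
      have := hfree i m hi hik hm (by omega) (ih (by omega)) (Ne.symm hne)
      omega
  have h2 : ∀ i, 0 ≤ i → i < k → ∀ m, m ≤ k → c i < m → N (i + 1) m = N i m + 1 := by
    intro i hi hik m hm
    have hci := hc i hi hik
    induction m, hm using Int.leInductionDown with
    | base =>
      intro _
      have := hN.bounds i k hi (by omega) (by omega) le_rfl
      have := hN.bounds (i + 1) k (by omega) (by omega) (by omega) le_rfl
      omega
    | pred m hm ih =>
      intro hmc
      have ih := ih (by omega)
      have hr := hN.row i (m - 1) hi hik (by omega) (by omega)
      by_contra hne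
      have := hfree i (m - 1) hi hik (by omega) (by omega) (by omega)
        (by rw [sub_add_cancel]; omega)
      omega
  intro i m hi hik hm hmk
  induction i, hi using Int.leInduction with
  | base =>
    have := hN.bounds 0 m le_rfl (by omega) hm hmk
    simp only [permCornerSum, Finset.Ico_self, Finset.sum_empty]
    omega
  | succ i hi ih =>
    rw [permCornerSum_row c hi, ← ih (by omega)]
    split_ifs with h
    · exact h2 i hi (by omega) m hmk h
    · rw [h1 i hi (by omega) m hm (by omega), add_zero]

lemma freeIn_permCornerSum (hc : ∀ i, 0 ≤ i → i < k → 0 ≤ c i ∧ c i < k)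
    (hinj : ∀ i i', 0 ≤ i → i < k → 0 ≤ i' → i' < k → c i = c i' → i = i') :
    freeIn pentagramCovers (cornerSet k) (cellSet k) (traceOf k (permCornerSum c)) =
      (Finset.Ico 0 k).image fun i => cellPt k i (c i) (permCornerSum c i (c i)) := by
  have hN := permCornerSum_isCornerSum hc hinj
  ext x
  rw [Finset.mem_image]
  constructor
  · intro hx
    obtain ⟨i, m, n, rfl⟩ := exists_cellPt (mem_cellSet.1 (Finset.mem_of_mem_filter x hx))
    obtain ⟨hb, hn, ha, hd⟩ := hN.cellPt_mem_free.1 hx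
    rw [permCornerSum_row c hb.1] at ha hd
    refine ⟨i, Finset.mem_Ico.2 ⟨hb.1, hb.2.1⟩, ?_⟩
    have : c i = m := by split_ifs at ha hd <;> omega
    rw [this, hn]
  · rintro ⟨i, hi, rfl⟩
    rw [Finset.mem_Ico] at hi
    have := hc i hi.1 hi.2
    refine hN.cellPt_mem_free.2 ⟨by omega, rfl, ?_, ?_⟩
    · rw [permCornerSum_row c hi.1]; simp
    · rw [permCornerSum_row c hi.1]; simp

end Perm

/-! ### Assembling the product -/

lemma exists_sign_monomial {ι : Type*} (s : Finset ι) (w : ι → MvPolynomial ℤ ℤ)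
    (h : ∀ p ∈ s, w p = -1 ∨ ∃ i, w p = X i) :
    ∃ (ε : ℤ) (d : ℤ →₀ ℕ), (ε = 1 ∨ ε = -1) ∧ ∏ p ∈ s, w p = C ε * monomial d 1 := by
  induction s using Finset.induction_on with
  | empty => exact ⟨1, 0, Or.inl rfl, by simp⟩
  | insert a s ha ih =>
    obtain ⟨ε, d, hε, he⟩ := ih fun p hp => h p (Finset.mem_insert_of_mem hp)
    rw [Finset.prod_insert ha, he]
    rcases h a (Finset.mem_insert_self a s) with hw | ⟨i, hw⟩
    · exact ⟨-ε, d, by omega, by rw [hw, map_neg]; ring⟩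
    · refine ⟨ε, Finsupp.single i 1 + d, hε, ?_⟩
      rw [hw, X, mul_left_comm, monomial_mul, one_mul]

lemma exists_prod_eq_pow {ι R : Type*} [CommMonoid R] (s : Finset ι) (f : ι → R) (A B D : R)
    (h : ∀ p ∈ s, f p = A ∨ f p = B ∨ f p = D) :
    ∃ a b c : ℕ, a + b + c = s.card ∧ ∏ p ∈ s, f p = A ^ a * B ^ b * D ^ c := by
  induction s using Finset.induction_on with
  | empty => exact ⟨0, 0, 0, rfl, by simp⟩
  | insert x s hx ih =>
    obtain ⟨a, b, c, hs, he⟩ := ih fun p hp => h p (Finset.mem_insert_of_mem hp)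
    rw [Finset.prod_insert hx, he, Finset.card_insert_of_notMem hx]
    rcases h x (Finset.mem_insert_self x s) with hw | hw | hw <;> rw [hw]
    · exact ⟨a + 1, b, c, by omega, by rw [pow_succ' A]; simp only [mul_assoc]⟩
    · exact ⟨a, b + 1, c, by omega, by
        rw [pow_succ' B]; simp only [mul_assoc, mul_left_comm B]⟩
    · exact ⟨a, b, c + 1, by omega, by
        rw [pow_succ' D]; simp only [mul_left_comm D]⟩

/-- The cell `(i, m)`, at which `3r + s = 4i + 2m + 3 - 3k`, lies on one of the three lines
`3r + s = l - 2k`, `3r + s = l + σ`, `3r + s = l + 2k`. -/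
def OnLine (k l i m : ℤ) : Prop :=
  4 * i + 2 * m + 3 - 3 * k = l - 2 * k ∨ 4 * i + 2 * m + 3 - 3 * k = l + pentagramSigma k l ∨
    4 * i + 2 * m + 3 - 3 * k = l + 2 * k

lemma pentagramSigma_cases {k l : ℤ} (hpar : (2 : ℤ) ∣ (l - (k + 1))) :
    (k % 2 = 1 ∧ pentagramSigma k l = 0) ∨
      (k % 2 = 0 ∧ (l + k) % 4 = 1 ∧ pentagramSigma k l = -2) ∨
      (k % 2 = 0 ∧ (l + k) % 4 = 3 ∧ pentagramSigma k l = 2) := by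
  unfold pentagramSigma
  split_ifs <;> omega

/-- The candidates for `m` are `e - k`, `e + σ/2` and `e + k` with `2e = l - 4i - 3 + 3k`. For `k` even
the congruence defining `σ` excludes the one value of `e` for which none of them is in range. -/
lemma exists_onLine {k l : ℤ} (hl : |l| ≤ k + 1) (hpar : (2 : ℤ) ∣ (l - (k + 1))) {i : ℤ}
    (hi : 0 ≤ i) (hik : i < k) : ∃ m, 0 ≤ m ∧ m < k ∧ OnLine k l i m := by
  obtain ⟨hl1, hl2⟩ := abs_le.1 hl
  have hσ := pentagramSigma_cases hpar
  obtain ⟨e, he⟩ : ∃ e, l - 4 * i - 3 + 3 * k = 2 * e := ⟨(l - 4 * i - 3 + 3 * k) / 2, by omega⟩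
  obtain ⟨σ, hs⟩ : ∃ σ, pentagramSigma k l = 2 * σ := ⟨pentagramSigma k l / 2, by omega⟩
  unfold OnLine
  by_cases h1 : 0 ≤ e + σ ∧ e + σ < k
  · exact ⟨e + σ, by omega⟩
  · by_cases h2 : k ≤ e
    · exact ⟨e - k, by omega⟩
    · exact ⟨e + k, by omega⟩

lemma onLine_row_unique {k l : ℤ} (hpar : (2 : ℤ) ∣ (l - (k + 1))) {i m m' : ℤ}
    (hm : 0 ≤ m) (hmk : m < k) (hm' : 0 ≤ m') (hmk' : m' < k)
    (h : OnLine k l i m) (h' : OnLine k l i m') : m = m' := by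
  have hσ := pentagramSigma_cases hpar
  unfold OnLine at h h'
  omega

lemma onLine_col_unique {k l : ℤ} (hpar : (2 : ℤ) ∣ (l - (k + 1))) {i i' m : ℤ}
    (hi : 0 ≤ i) (hik : i < k) (hi' : 0 ≤ i') (hik' : i' < k)
    (h : OnLine k l i m) (h' : OnLine k l i' m) : i = i' := by
  have hσ := pentagramSigma_cases hpar
  unfold OnLine at h h'
  omega

lemma substNeg_X (S : Set ℤ) (i : ℤ) : substNeg S (X i) = if i ∈ S then -1 else X i := by
  simp [substNeg]

lemma substNeg_cellPt {j k l i m n : ℤ} (hpar : (2 : ℤ) ∣ (l - (k + 1)))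
    (h : cellPt k i m n ∈ pentagramQ (k + 1)) (S : Set ℤ)
    (hS : S = AP (j - 3 * k + 3) (j + 3 * k - 3) 2 \
          {j + l - 2 * k, j + l + pentagramSigma k l, j + l + 2 * k}) :
    substNeg S (X (3 * (cellPt k i m n).1 + (cellPt k i m n).2.1 + j)) =
      if OnLine k l i m then X (4 * i + 2 * m + 3 - 3 * k + j) else -1 := by
  rw [cellPt_mem] at h
  have h1 : 3 * (cellPt k i m n).1 + (cellPt k i m n).2.1 + j = 4 * i + 2 * m + 3 - 3 * k + j := by
    simp only [cellPt]; ring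
  have h2 : 4 * i + 2 * m + 3 - 3 * k + j ∈ S ↔ ¬ OnLine k l i m := by
    subst hS
    simp only [AP, OnLine, Set.mem_sdiff, Set.mem_ofPred_eq, Set.mem_insert_iff,
      Set.mem_singleton_iff]
    omega
  rw [h1, substNeg_X]
  simp only [h2, ite_not]

lemma one_add_X_ne_zero (i : ℤ) : (1 + X i : MvPolynomial ℤ ℤ) ≠ 0 := by
  intro h
  simpa using congrArg (eval fun _ => (0 : ℤ)) h

theorem stmt4 (j k l : ℤ) (hk : 1 ≤ k) (hl : |l| ≤ k + 1) (hpar : (2 : ℤ) ∣ (l - (k + 1))) :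
    ∃ (ε : ℤ) (d : ℤ →₀ ℕ) (a b c : ℕ),
      (ε = 1 ∨ ε = -1) ∧ ((a : ℤ) + b + c = k) ∧
      substNeg (AP (j - 3 * k + 3) (j + 3 * k - 3) 2 \
          {j + l - 2 * k, j + l + pentagramSigma k l, j + l + 2 * k}) (pentagramF j k) =
        C ε * monomial d 1 * (1 + X (j + l - 2 * k)) ^ a *
          (1 + X (j + l + pentagramSigma k l)) ^ b * (1 + X (j + l + 2 * k)) ^ c ∧
      substNeg (AP (j - 3 * k + 3) (j + 3 * k - 3) 2 \
          {j + l - 2 * k, j + l + pentagramSigma k l, j + l + 2 * k}) (pentagramF j k) ≠ 0 := by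
  set S : Set ℤ := AP (j - 3 * k + 3) (j + 3 * k - 3) 2 \
    {j + l - 2 * k, j + l + pentagramSigma k l, j + l + 2 * k} with hS
  have hex : ∀ i, ∃ m, 0 ≤ i → i < k → 0 ≤ m ∧ m < k ∧ OnLine k l i m := by
    intro i
    by_cases hi : 0 ≤ i ∧ i < k
    · obtain ⟨m, hm⟩ := exists_onLine hl hpar hi.1 hi.2
      exact ⟨m, fun _ _ => hm⟩
    · exact ⟨0, fun h1 h2 => absurd ⟨h1, h2⟩ hi⟩
  choose c hc' using hex
  have hc : ∀ i, 0 ≤ i → i < k → 0 ≤ c i ∧ c i < k := fun i h1 h2 =>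
    ⟨(hc' i h1 h2).1, (hc' i h1 h2).2.1⟩
  have hinj : ∀ i i', 0 ≤ i → i < k → 0 ≤ i' → i' < k → c i = c i' → i = i' := by
    intro i i' h1 h2 h3 h4 he
    exact onLine_col_unique hpar h1 h2 h3 h4 (hc' i h1 h2).2.2 (he ▸ (hc' i' h3 h4).2.2)
  have hN₀ := permCornerSum_isCornerSum hc hinj
  set J₀ := traceOf k (permCornerSum c) with hJ₀
  have hJ₀Q : J₀ ⊆ cornerSet k := Finset.filter_subset _ _
  have hsingle := map_pentagramF (substNeg S) j k
  -- The trace of the permutation `c` is the only one with a nonzero contribution.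
  rw [Finset.sum_eq_single J₀] at hsingle
  rotate_left
  · intro J hJ hne
    rw [Finset.mem_filter, Finset.mem_powerset] at hJ
    obtain ⟨N, hN, rfl⟩ := hJ.2.eq_traceOf hJ.1
    apply mul_eq_zero_of_right
    by_contra hprod
    refine hne (traceOf_congr (hN.eq_permCornerSum hc ?_))
    intro i m h1 h2 h3 h4 h5 h6
    have hfree := hN.cellPt_mem_free.2 ⟨⟨h1, h2, h3, h4⟩, rfl, h5, h6⟩
    -- A free element off the three lines would contribute the factor `1 + (-1) = 0`.
    by_contra hmc
    refine hprod (Finset.prod_eq_zero hfree ?_)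
    rw [substNeg_cellPt hpar (mem_cellSet.1 (Finset.mem_of_mem_filter _ hfree)) S hS,
      if_neg, add_neg_cancel]
    intro hline
    exact hmc (onLine_row_unique hpar h3 h4 (hc i h1 h2).1 (hc i h1 h2).2 hline
      (hc' i h1 h2).2.2)
  · intro h
    exact absurd (Finset.mem_filter.2 ⟨Finset.mem_powerset.2 hJ₀Q, hN₀.isTrace⟩) h
  have hw : ∀ p : ℤ × ℤ × ℤ, substNeg S (X (3 * p.1 + p.2.1 + j)) = -1 ∨
      ∃ i, substNeg S (X (3 * p.1 + p.2.1 + j)) = X i := by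
    intro p
    rw [substNeg_X]
    split_ifs
    · exact Or.inl rfl
    · exact Or.inr ⟨_, rfl⟩
  obtain ⟨ε₁, d₁, hε₁, he₁⟩ := exists_sign_monomial J₀ _ fun p _ => hw p
  obtain ⟨ε₂, d₂, hε₂, he₂⟩ :=
    exists_sign_monomial (forcedIn pentagramCovers (cellSet k) J₀) _ fun p _ => hw p
  rw [he₁, he₂, hJ₀, freeIn_permCornerSum hc hinj, Finset.prod_image] at hsingle
  rotate_left
  · intro x _ y _ hxy
    exact (cellPt_inj.1 hxy).1
  obtain ⟨a, b, e, habe, hpow⟩ := exists_prod_eq_pow (Finset.Ico 0 k)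
    (fun i => 1 + substNeg S (X (3 * (cellPt k i (c i) (permCornerSum c i (c i))).1 +
      (cellPt k i (c i) (permCornerSum c i (c i))).2.1 + j)))
    (1 + X (j + l - 2 * k)) (1 + X (j + l + pentagramSigma k l)) (1 + X (j + l + 2 * k)) (by
      intro i hi
      have hmem : cellPt k i (c i) (permCornerSum c i (c i)) ∈ pentagramQ (k + 1) := by
        refine mem_cellSet.1 (Finset.mem_of_mem_filter _
          (?_ : _ ∈ freeIn pentagramCovers (cornerSet k) (cellSet k) J₀))
        rw [hJ₀, freeIn_permCornerSum hc hinj]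
        exact Finset.mem_image_of_mem _ hi
      rw [Finset.mem_Ico] at hi
      have hline := (hc' i hi.1 hi.2).2.2
      rw [substNeg_cellPt hpar hmem S hS, if_pos hline]
      rcases hline with h | h | h <;> rw [h]
      · left; congr 2; ring
      · right; left; congr 2; ring
      · right; right; congr 2; ring)
  have hmain : substNeg S (pentagramF j k) =
      C (ε₁ * ε₂) * monomial (d₁ + d₂) 1 * (1 + X (j + l - 2 * k)) ^ a *
          (1 + X (j + l + pentagramSigma k l)) ^ b * (1 + X (j + l + 2 * k)) ^ e := by
    rw [hsingle, hpow, map_mul, ← one_mul (1 : ℤ), ← monomial_mul, one_mul]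
    ring
  have hε : ε₁ * ε₂ = 1 ∨ ε₁ * ε₂ = -1 := by
    rcases hε₁ with rfl | rfl <;> rcases hε₂ with rfl | rfl <;> simp
  refine ⟨ε₁ * ε₂, d₁ + d₂, a, b, e, hε, ?_, hmain, ?_⟩
  · rw [Int.card_Ico] at habe
    omega
  · rw [hmain]
    have h1 : (C (ε₁ * ε₂) : MvPolynomial ℤ ℤ) ≠ 0 := by
      rw [Ne, C_eq_zero]; omega
    have h2 : (monomial (d₁ + d₂) (1 : ℤ)) ≠ 0 := by
      rw [Ne, monomial_eq_zero]; exact one_ne_zero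
    exact mul_ne_zero (mul_ne_zero (mul_ne_zero (mul_ne_zero h1 h2)
      (pow_ne_zero _ (one_add_X_ne_zero _))) (pow_ne_zero _ (one_add_X_ne_zero _)))
      (pow_ne_zero _ (one_add_X_ne_zero _))

end
end

section
/- Fix integers j, k ≥ 1, and l with |l| ≤ k+1 and l ≡ k+1 (mod 2), and let σ be as defined. Then there exists a permutation π of {1,…,k} such that for all i, c ∈ {1,…,k}: j+2i+4c−3k−3 ∈ {j+l−2k, j+l+σ, j+l+2k} if and only if c = π(i). -/
/-! Cancelling `j` and halving, the condition on `(i, c)` is `i + 2c ∈ {m - k, m + σ/2, m + k}`,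
where `m = (l + 3k + 3)/2` satisfies `k + 1 ≤ m ≤ 2k + 2`. The shift `σ` is chosen so that
`m + σ/2` and `m + k` have opposite parity. Fix a row `i`. If `i ≡ m + σ/2 (mod 2)`, only the middle
value is possible, and it gives one column, which the bounds on `m` place in `[1, k]`. Otherwise
only the outer two values are possible; their columns differ by `k`, and exactly one of them lies
in `[1, k]` (`existsUnique_column`). Two rows sharing a column would differ by `2k` or by
`k ± σ/2`. For even `k` the only such difference below `k` is `k - 1`, which needs rows `1` and `k`
and is excluded by parity (`row_unique`). Hence the row-to-column map is an injective self-map of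
the finite set `[1, k]`, so it extends to a permutation of `ℤ`. -/

open MvPolynomial
open scoped Classical

noncomputable section

/-- The condition on position `(i, c)` with `j` cancelled, as a disjunction of linear equations. -/
def OnGraph (k l i c : ℤ) : Prop :=
  2 * i + 4 * c = l + k + 3 ∨ 2 * i + 4 * c = l + 3 * k + 3 + pentagramSigma k l ∨
    2 * i + 4 * c = l + 5 * k + 3

theorem mem_iff_onGraph (j k l i c : ℤ) :
    j + 2 * i + 4 * c - 3 * k - 3 ∈
      ({j + l - 2 * k, j + l + pentagramSigma k l, j + l + 2 * k} : Set ℤ) ↔ OnGraph k l i c := by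
  simp only [Set.mem_insert_iff, Set.mem_singleton_iff, OnGraph]
  omega

theorem existsUnique_column {k l i : ℤ} (hl : |l| ≤ k + 1)
    (hpar : (2 : ℤ) ∣ (l - (k + 1))) (hi : i ∈ Finset.Icc 1 k) :
    ∃ c ∈ Finset.Icc 1 k, ∀ c' ∈ Finset.Icc 1 k, (OnGraph k l i c' ↔ c' = c) := by
  rw [abs_le] at hl
  simp only [Finset.mem_Icc] at *
  have key : ∃ c, (1 ≤ c ∧ c ≤ k) ∧ OnGraph k l i c := by
    by_cases h4 : (4 : ℤ) ∣ l + k + 3 - 2 * i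
    · obtain ⟨q, hq⟩ := h4
      -- The two outer values give the columns `q` and `q + k`.
      by_cases hq1 : 1 ≤ q
      · exact ⟨q, by omega, Or.inl (by omega)⟩
      · exact ⟨q + k, by omega, Or.inr (Or.inr (by omega))⟩
    · refine ⟨(l + 3 * k + 3 + pentagramSigma k l - 2 * i) / 4, ?_, Or.inr (Or.inl ?_)⟩ <;>
        unfold pentagramSigma <;> split_ifs <;> omega
  obtain ⟨c, hc, hG⟩ := key
  refine ⟨c, hc, fun c' hc' => ⟨fun hG' => ?_, fun h => h ▸ hG⟩⟩
  unfold OnGraph pentagramSigma at *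
  split_ifs at * <;> omega

theorem row_unique {k l i i' c : ℤ} (hpar : (2 : ℤ) ∣ (l - (k + 1)))
    (hi : i ∈ Finset.Icc 1 k) (hi' : i' ∈ Finset.Icc 1 k)
    (h : OnGraph k l i c) (h' : OnGraph k l i' c) : i = i' := by
  simp only [Finset.mem_Icc] at *
  unfold OnGraph pentagramSigma at *
  split_ifs at * <;> omega

theorem stmt5 (j k l : ℤ) (hk : 1 ≤ k) (hl : |l| ≤ k + 1) (hpar : (2 : ℤ) ∣ (l - (k + 1))) :
    ∃ π : Equiv.Perm ℤ, (∀ i ∈ Finset.Icc (1 : ℤ) k, π i ∈ Finset.Icc (1 : ℤ) k) ∧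
      ∀ i ∈ Finset.Icc (1 : ℤ) k, ∀ c ∈ Finset.Icc (1 : ℤ) k,
        (j + 2 * i + 4 * c - 3 * k - 3 ∈
            ({j + l - 2 * k, j + l + pentagramSigma k l, j + l + 2 * k} : Set ℤ) ↔ c = π i) := by
  choose! f hf hfG using fun i (hi : i ∈ Finset.Icc 1 k) => existsUnique_column hl hpar hi
  let g : Finset.Icc 1 k → Finset.Icc 1 k := fun i => ⟨f i, hf i i.2⟩
  have hg : Function.Injective g := by
    intro a b hab
    have hab' : f a = f b := congrArg Subtype.val hab
    exact Subtype.ext (row_unique hpar a.2 b.2 ((hfG a a.2 _ (hf a a.2)).2 rfl)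
      ((hfG b b.2 _ (hf a a.2)).2 hab'))
  let e : Equiv.Perm (Finset.Icc 1 k) := Equiv.ofBijective g (Finite.injective_iff_bijective.1 hg)
  have he : ∀ i ∈ Finset.Icc 1 k, Equiv.Perm.ofSubtype e i = f i := fun i hi =>
    Equiv.Perm.ofSubtype_apply_of_mem e hi
  refine ⟨Equiv.Perm.ofSubtype e, fun i hi => he i hi ▸ hf i hi, fun i hi c hc => ?_⟩
  rw [mem_iff_onGraph, he i hi]
  exact hfG i hi c hc

end
end
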